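/- arXiv:1512.06209 — 8 statements merged into one kernel-verified Lean document; each statement's English description precedes it below -/
import Mathlib

section
/- Let $k_1,k_2,k_3$ be real constants and let $\phi:(-b_o,b_o)\to\mathbb{R}$ be a $C^2$ function satisfying $\phi(0)=1$ and the ODE $(1+(k_1+k_3)s^2+k_2s^4)\phi''(s)=(k_1+k_2s^2)(\phi(s)-s\phi'(s))$ for all $s\in(-b_o,b_o)$, where $1+(k_1+k_3)s^2+k_2s^4>0$ on $(-b_o,b_o)$. Then for every $s\in(-b_o,b_o)$, $\phi(s)-s\phi'(s)=\exp\big(-\tfrac{1}{2}\int_0^{s^2}\tfrac{k_1+k_2\theta}{1+(k_1+k_3)\theta+k_2\theta^2}\,d\theta\big)$; in particular $\phi(s)-s\phi'(s)>0$. -/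
open Set intervalIntegral

/-!
The function `u s = φ s - s φ' s` has derivative `-s φ'' s`, so for an equation of the form
`φ'' s = f (s²) (φ s - s φ' s)` it solves the first-order linear equation `u' = -s f(s²) u`.
Hence `u s = exp (-∫₀ˢ t f(t²) dt) u 0`, and the substitution `θ = t²` gives the formula.
-/

section

variable {E : Type*} [NormedAddCommGroup E] [NormedSpace ℝ E] {I : Set ℝ}

theorem hasDerivAt_integral_of_continuousOn [CompleteSpace E] {f : ℝ → E} (hI : IsOpen I)
    (hIc : IsPreconnected I) (hf : ContinuousOn f I) {x₀ x : ℝ} (hx₀ : x₀ ∈ I) (hx : x ∈ I) :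
    HasDerivAt (fun y => ∫ t in x₀..y, f t) (f x) x :=
  integral_hasDerivAt_right
    (hf.mono (hIc.ordConnected.uIcc_subset hx₀ hx)).intervalIntegrable
    (hf.stronglyMeasurableAtFilter hI x hx) (hf.continuousAt (hI.mem_nhds hx))

theorem eq_exp_integral_smul_of_hasDerivAt {a : ℝ → ℝ} {u : ℝ → E} (hI : IsOpen I)
    (hIc : IsPreconnected I) (ha : ContinuousOn a I)
    (hu : ∀ x ∈ I, HasDerivAt u (a x • u x) x) {x₀ x : ℝ} (hx₀ : x₀ ∈ I) (hx : x ∈ I) :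
    u x = Real.exp (∫ t in x₀..x, a t) • u x₀ := by
  set A : ℝ → ℝ := fun y => ∫ t in x₀..y, a t
  have hderiv : ∀ y ∈ I, HasDerivAt (fun z => Real.exp (-A z) • u z) 0 y := by
    intro y hy
    have hA : HasDerivAt A (a y) y := hasDerivAt_integral_of_continuousOn hI hIc ha hx₀ hy
    refine (hA.neg.exp.smul (hu y hy)).congr_deriv ?_
    module
  have hconst : Real.exp (-A x) • u x = u x₀ := by
    simpa [A] using hI.is_const_of_deriv_eq_zero hIc
      (fun y hy => (hderiv y hy).differentiableAt.differentiableWithinAt)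
      (fun y hy => (hderiv y hy).deriv) hx hx₀
  rw [← hconst, smul_smul, ← Real.exp_add, add_neg_cancel, Real.exp_zero, one_smul]

theorem integral_smul_comp_sq {f : ℝ → E} {a b : ℝ}
    (hf : ContinuousOn f ((· ^ 2) '' uIcc a b)) :
    ∫ t in a..b, t • f (t ^ 2) = (1 / 2 : ℝ) • ∫ θ in (a ^ 2)..(b ^ 2), f θ := by
  have hsubst : ∫ t in a..b, (2 * t) • f (t ^ 2) = ∫ θ in (a ^ 2)..(b ^ 2), f θ :=
    integral_deriv_smul_comp' (fun t _ => by simpa using hasDerivAt_pow 2 t)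
      (by fun_prop) hf
  rw [← hsubst, ← integral_smul]
  simp only [smul_smul, ← mul_assoc, one_div_mul_cancel (two_ne_zero' ℝ), one_mul]

theorem hasDerivAt_sub_smul_deriv {φ φ' : ℝ → E} {φ'' : E} {s : ℝ}
    (hφ : HasDerivAt φ (φ' s) s) (hφ' : HasDerivAt φ' φ'' s) :
    HasDerivAt (fun t => φ t - t • φ' t) (-(s • φ'')) s := by
  refine (hφ.sub ((hasDerivAt_id s).smul hφ')).congr_deriv ?_
  simp only [id_eq]
  module

theorem sub_smul_deriv_eq_exp_integral_smul {f : ℝ → ℝ} {φ φ' φ'' : ℝ → E} (hI : IsOpen I)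
    (hIc : IsPreconnected I) (h0 : (0 : ℝ) ∈ I) (hf : ContinuousOn f ((· ^ 2) '' I))
    (hφ : ∀ s ∈ I, HasDerivAt φ (φ' s) s) (hφ' : ∀ s ∈ I, HasDerivAt φ' (φ'' s) s)
    (hode : ∀ s ∈ I, φ'' s = f (s ^ 2) • (φ s - s • φ' s)) {s : ℝ} (hs : s ∈ I) :
    φ s - s • φ' s = Real.exp (-(1 / 2) * ∫ θ in (0 : ℝ)..(s ^ 2), f θ) • φ 0 := by
  have hcont : ContinuousOn (fun t => -(t * f (t ^ 2))) I :=
    (continuousOn_id.mul (hf.comp (by fun_prop) (mapsTo_image _ I))).neg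
  have hlinear : ∀ t ∈ I, HasDerivAt (fun t => φ t - t • φ' t)
      (-(t * f (t ^ 2)) • (φ t - t • φ' t)) t := by
    intro t ht
    refine (hasDerivAt_sub_smul_deriv (hφ t ht) (hφ' t ht)).congr_deriv ?_
    rw [hode t ht, smul_smul, neg_smul]
  have hexponent : ∫ t in (0 : ℝ)..s, -(t * f (t ^ 2))
      = -(1 / 2) * ∫ θ in (0 : ℝ)..(s ^ 2), f θ := by
    have hsq := integral_smul_comp_sq
      (hf.mono (image_mono (hIc.ordConnected.uIcc_subset h0 hs)))
    simp only [smul_eq_mul, zero_pow two_ne_zero] at hsq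
    rw [integral_neg, hsq, neg_mul]
  simpa only [hexponent, zero_smul, sub_zero] using
    eq_exp_integral_smul_of_hasDerivAt hI hIc hcont hlinear h0 hs

end

theorem stmt_0_general {I : Set ℝ} (hI : IsOpen I) (hIc : IsPreconnected I) (h0 : (0 : ℝ) ∈ I)
    {k₁ k₂ k₃ : ℝ} {φ φ' φ'' : ℝ → ℝ} (hφ0 : φ 0 = 1)
    (hφ : ∀ s ∈ I, HasDerivAt φ (φ' s) s) (hφ' : ∀ s ∈ I, HasDerivAt φ' (φ'' s) s)
    (hpos : ∀ s ∈ I, 0 < 1 + (k₁ + k₃) * s ^ 2 + k₂ * s ^ 4)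
    (hode : ∀ s ∈ I, (1 + (k₁ + k₃) * s ^ 2 + k₂ * s ^ 4) * φ'' s
      = (k₁ + k₂ * s ^ 2) * (φ s - s * φ' s)) {s : ℝ} (hs : s ∈ I) :
    φ s - s * φ' s
      = Real.exp (-(1 / 2) * ∫ θ in (0 : ℝ)..(s ^ 2),
          (k₁ + k₂ * θ) / (1 + (k₁ + k₃) * θ + k₂ * θ ^ 2)) ∧
    0 < φ s - s * φ' s := by
  have hne : ∀ t ∈ I, 1 + (k₁ + k₃) * t ^ 2 + k₂ * (t ^ 2) ^ 2 ≠ 0 := by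
    intro t ht
    simpa only [← pow_mul] using (hpos t ht).ne'
  have hcont : ContinuousOn (fun θ => (k₁ + k₂ * θ) / (1 + (k₁ + k₃) * θ + k₂ * θ ^ 2))
      ((· ^ 2) '' I) :=
    ContinuousOn.div (by fun_prop) (by fun_prop) (forall_mem_image.2 hne)
  have hsolved : ∀ t ∈ I, φ'' t
      = (k₁ + k₂ * t ^ 2) / (1 + (k₁ + k₃) * t ^ 2 + k₂ * (t ^ 2) ^ 2) * (φ t - t * φ' t) := by
    intro t ht
    rw [div_mul_eq_mul_div, eq_div_iff (hne t ht), ← hode t ht]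
    ring
  have hformula := sub_smul_deriv_eq_exp_integral_smul hI hIc h0 hcont hφ hφ' hsolved hs
  simp only [smul_eq_mul, hφ0, mul_one] at hformula
  exact ⟨hformula, hformula ▸ Real.exp_pos _⟩

/-- For a `C²` solution `φ` of the ODE
`(1+(k₁+k₃)s²+k₂s⁴)φ'' = (k₁+k₂s²)(φ - sφ')` on `(-b₀, b₀)` with `φ(0) = 1`,
one has `φ(s) - sφ'(s) = exp(-(1/2)∫₀^{s²} (k₁+k₂θ)/(1+(k₁+k₃)θ+k₂θ²) dθ) > 0`. -/
theorem stmt_0 (k₁ k₂ k₃ bo : ℝ) (hbo : 0 < bo)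
    (φ φ' φ'' : ℝ → ℝ)
    (hφ0 : φ 0 = 1)
    (hd1 : ∀ s ∈ Ioo (-bo) bo, HasDerivAt φ (φ' s) s)
    (hd2 : ∀ s ∈ Ioo (-bo) bo, HasDerivAt φ' (φ'' s) s)
    (hcont : ContinuousOn φ'' (Ioo (-bo) bo))
    (hpos : ∀ s ∈ Ioo (-bo) bo, 0 < 1 + (k₁ + k₃) * s ^ 2 + k₂ * s ^ 4)
    (hode : ∀ s ∈ Ioo (-bo) bo,
      (1 + (k₁ + k₃) * s ^ 2 + k₂ * s ^ 4) * φ'' s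
        = (k₁ + k₂ * s ^ 2) * (φ s - s * φ' s)) :
    ∀ s ∈ Ioo (-bo) bo,
      φ s - s * φ' s
        = Real.exp (-(1 / 2) * ∫ θ in (0:ℝ)..(s ^ 2),
            (k₁ + k₂ * θ) / (1 + (k₁ + k₃) * θ + k₂ * θ ^ 2)) ∧
      0 < φ s - s * φ' s := fun _ hs =>
  stmt_0_general isOpen_Ioo isPreconnected_Ioo ⟨neg_lt_zero.2 hbo, hbo⟩ hφ0 hd1 hd2 hpos hode hs
end

section
/- Let $k_1,k_2,k_3$ be real constants with $k_2\le 0$, and let $b\ge 0$. Then the following are equivalent: (a) for all real $s$ with $|s|\le b$, both $1+k_1b^2+(k_3+k_2b^2)s^2>0$ and $1+(k_1+k_3)s^2+k_2s^4>0$; (b) $1+k_1b^2>0$ and $1+(k_1+k_3)b^2+k_2b^4>0$. -/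
/-!
For fixed `b`, both expressions are concave functions of `t = s ^ 2 ∈ [0, b ^ 2]`: the first is
affine, and the second is quadratic with leading coefficient `k₂ ≤ 0`. A concave function is
positive on an interval iff it is positive at the endpoints. At `t = b ^ 2` the two expressions
coincide, and at `t = 0` the second one is `1`, so only two endpoint conditions remain.
-/

open Set

theorem concaveOn_quadratic {R : Type*} [CommRing R] [LinearOrder R] [IsStrictOrderedRing R]
    {a : R} (ha : a ≤ 0) (b c : R) : ConcaveOn R univ fun x ↦ c + b * x + a * x ^ 2 := by
  have hconst : ConcaveOn R univ fun _ : R ↦ c := concaveOn_const c convex_univ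
  have hlin : ConcaveOn R univ fun x ↦ b * x := (LinearMap.mulLeft R b).concaveOn convex_univ
  have hsq : ConcaveOn R univ fun x ↦ a * x ^ 2 := by
    have hneg : ConvexOn R univ fun x ↦ -a * x ^ 2 :=
      even_two.convexOn_pow.smul (neg_nonneg.2 ha)
    simpa only [Pi.neg_def, neg_mul, neg_neg] using hneg.neg
  exact (hconst.add hlin).add hsq

section OrderedField

variable {𝕜 : Type*} [Field 𝕜] [LinearOrder 𝕜] [IsStrictOrderedRing 𝕜]

theorem quadratic_pos_of_mem_Icc {a b c x y t : 𝕜} (ha : a ≤ 0)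
    (hx : 0 < c + b * x + a * x ^ 2) (hy : 0 < c + b * y + a * y ^ 2) (ht : t ∈ Icc x y) :
    0 < c + b * t + a * t ^ 2 :=
  (lt_min hx hy).trans_le <|
    (concaveOn_quadratic ha b c).min_le_of_mem_Icc (mem_univ x) (mem_univ y) ht

theorem stmt_2_general (k₁ k₂ k₃ b : 𝕜) (hk₂ : k₂ ≤ 0) (hb : 0 ≤ b) :
    (∀ s : 𝕜, |s| ≤ b →
        0 < 1 + k₁ * b ^ 2 + (k₃ + k₂ * b ^ 2) * s ^ 2 ∧
        0 < 1 + (k₁ + k₃) * s ^ 2 + k₂ * s ^ 4)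
      ↔ (0 < 1 + k₁ * b ^ 2 ∧ 0 < 1 + (k₁ + k₃) * b ^ 2 + k₂ * b ^ 4) := by
  constructor
  · intro hpos
    exact ⟨by simpa using (hpos 0 (by simpa using hb)).1, (hpos b (abs_of_nonneg hb).le).2⟩
  · rintro ⟨hzero, hend⟩ s hs
    have hs_mem : s ^ 2 ∈ Icc 0 (b ^ 2) := ⟨sq_nonneg s, sq_le_sq.2 (hs.trans (le_abs_self b))⟩
    constructor
    · have haffine_end : 0 < 1 + k₁ * b ^ 2 + (k₃ + k₂ * b ^ 2) * b ^ 2 := by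
        linear_combination hend
      simpa using quadratic_pos_of_mem_Icc (a := 0) le_rfl
        (by simpa using hzero) (by simpa using haffine_end) hs_mem
    · have hquad_end : 0 < 1 + (k₁ + k₃) * b ^ 2 + k₂ * (b ^ 2) ^ 2 := by
        linear_combination hend
      have hquad := quadratic_pos_of_mem_Icc hk₂ (by simp) hquad_end hs_mem
      linear_combination hquad

end OrderedField

/-- Proposition 2.1(i): for `k₂ ≤ 0` and `b ≥ 0`, the regularity inequalities
hold for all `|s| ≤ b` iff `1 + k₁b² > 0` and `1 + (k₁+k₃)b² + k₂b⁴ > 0`. -/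
theorem stmt_2 (k₁ k₂ k₃ b : ℝ) (hk₂ : k₂ ≤ 0) (hb : 0 ≤ b) :
    (∀ s : ℝ, |s| ≤ b →
        0 < 1 + k₁ * b ^ 2 + (k₃ + k₂ * b ^ 2) * s ^ 2 ∧
        0 < 1 + (k₁ + k₃) * s ^ 2 + k₂ * s ^ 4)
      ↔ (0 < 1 + k₁ * b ^ 2 ∧ 0 < 1 + (k₁ + k₃) * b ^ 2 + k₂ * b ^ 4) :=
  stmt_2_general k₁ k₂ k₃ b hk₂ hb
end

section
/- Let $k_1,k_2,k_3$ be real constants and let $I\subseteq[0,\infty)$ be an interval on which $f(t):=1+(k_1+k_3)t+k_2t^2>0$. Suppose $u,v,w:I\to\mathbb{R}$ are differentiable with $u>0$, $w\ne0$, $u+vt>0$ on $I$, and satisfy the ODE system $u'=\frac{v-k_1u}{f}$, $v'=\frac{u(k_2u-k_3v-2k_1v)+2v^2}{uf}$, $w'=\frac{w(3v-k_3u-2k_1u)}{2uf}$. Then for every $t\in I$, $\frac{d}{dt}\Big(\frac{w(t)^2\,t}{u(t)+v(t)\,t}\Big)=\frac{w(t)^2}{u(t)\,f(t)}>0$; in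 particular the function $t\mapsto\frac{w(t)^2 t}{u(t)+v(t)t}$ is strictly increasing on $I$, so for any constant $A$ the equation $\frac{w(B)^2B}{u(B)+v(B)B}=A$ has at most one solution $B\in I$. -/
open Set

/-!
With `g = u + v t`, the system makes `g` satisfy the linear equation
`g' = g (2v - k₁u + k₂ut) / (uf)`, so both `w` and `g` have explicit logarithmic derivatives.
The one of `w²/g` is then `(v - (k₁ + k₃ + k₂t)u) / (uf)`, and since `f = 1 + t (k₁ + k₃ + k₂t)`
this gives `1 + t (log (w²/g))' = g / (uf)`. Multiplying by `w²/g` cancels `g` and leaves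
`(w² t / g)' = w² / (uf)`.
-/

section NontriviallyNormedField

variable {𝕜 : Type*} [NontriviallyNormedField 𝕜]

/-- The quadratic factor `f` in the denominators of the deformation system (3)-(5). -/
def deformationFactor (k₁ k₂ k₃ t : 𝕜) : 𝕜 :=
  1 + (k₁ + k₃) * t + k₂ * t ^ 2

/-- The deformation system (3)-(5) for `(u, v, w)` on `I`. Derivatives are taken within `I`, hence
one-sided at the endpoints of an interval. Where a denominator vanishes, the
equation reads with `x / 0 = 0`. -/
structure IsDeformationSolutionOn (k₁ k₂ k₃ : 𝕜) (u v w : 𝕜 → 𝕜) (I : Set 𝕜) : Prop where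
  hasDerivWithinAt_u : ∀ t ∈ I, HasDerivWithinAt u
    ((v t - k₁ * u t) / deformationFactor k₁ k₂ k₃ t) I t
  hasDerivWithinAt_v : ∀ t ∈ I, HasDerivWithinAt v
    ((u t * (k₂ * u t - k₃ * v t - 2 * k₁ * v t) + 2 * v t ^ 2) /
      (u t * deformationFactor k₁ k₂ k₃ t)) I t
  hasDerivWithinAt_w : ∀ t ∈ I, HasDerivWithinAt w
    (w t * (3 * v t - k₃ * u t - 2 * k₁ * u t) /
      (2 * u t * deformationFactor k₁ k₂ k₃ t)) I t

theorem hasDerivWithinAt_sq_mul_self_div_of_logDeriv {w g : 𝕜 → 𝕜} {p q t : 𝕜} {I : Set 𝕜}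
    (hw : HasDerivWithinAt w (w t * p) I t) (hg : HasDerivWithinAt g (g t * q) I t)
    (hgt : g t ≠ 0) :
    HasDerivWithinAt (fun s => w s ^ 2 * s / g s)
      (w t ^ 2 / g t * (1 + t * (2 * p - q))) I t := by
  have hnum := (hw.fun_pow 2).fun_mul (hasDerivAt_id' t).hasDerivWithinAt
  refine (hnum.fun_div hg hgt).congr_deriv ?_
  field_simp
  push_cast
  ring

namespace IsDeformationSolutionOn

variable {k₁ k₂ k₃ t : 𝕜} {u v w : 𝕜 → 𝕜} {I : Set 𝕜}

theorem hasDerivWithinAt_add_mul_self (h : IsDeformationSolutionOn k₁ k₂ k₃ u v w I)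
    (ht : t ∈ I) (hut : u t ≠ 0) (hft : deformationFactor k₁ k₂ k₃ t ≠ 0) :
    HasDerivWithinAt (fun s => u s + v s * s)
      ((u t + v t * t) * ((2 * v t - k₁ * u t + k₂ * u t * t) /
        (u t * deformationFactor k₁ k₂ k₃ t))) I t := by
  refine ((h.hasDerivWithinAt_u t ht).fun_add
    ((h.hasDerivWithinAt_v t ht).fun_mul (hasDerivAt_id' t).hasDerivWithinAt)).congr_deriv ?_
  field_simp
  rw [deformationFactor]
  ring

theorem hasDerivWithinAt_sq_mul_self_div [NeZero (2 : 𝕜)]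
    (h : IsDeformationSolutionOn k₁ k₂ k₃ u v w I) (ht : t ∈ I) (hut : u t ≠ 0)
    (hft : deformationFactor k₁ k₂ k₃ t ≠ 0) (hgt : u t + v t * t ≠ 0) :
    HasDerivWithinAt (fun s => w s ^ 2 * s / (u s + v s * s))
      (w t ^ 2 / (u t * deformationFactor k₁ k₂ k₃ t)) I t := by
  have hw := (h.hasDerivWithinAt_w t ht).congr_deriv (mul_div_assoc _ _ _)
  have hg := h.hasDerivWithinAt_add_mul_self ht hut hft
  have one_add_mul_logDeriv :
      1 + t * (2 * ((3 * v t - k₃ * u t - 2 * k₁ * u t) /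
          (2 * u t * deformationFactor k₁ k₂ k₃ t)) -
        (2 * v t - k₁ * u t + k₂ * u t * t) / (u t * deformationFactor k₁ k₂ k₃ t)) =
      (u t + v t * t) / (u t * deformationFactor k₁ k₂ k₃ t) := by
    field_simp
    rw [deformationFactor]
    ring
  refine (hasDerivWithinAt_sq_mul_self_div_of_logDeriv hw hg hgt).congr_deriv ?_
  rw [one_add_mul_logDeriv, div_mul_div_cancel₀ hgt]

end IsDeformationSolutionOn

end NontriviallyNormedField

theorem stmt_5_general {k₁ k₂ k₃ : ℝ} {I : Set ℝ} {u v w : ℝ → ℝ} (hI : I.OrdConnected)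
    (h : IsDeformationSolutionOn k₁ k₂ k₃ u v w I)
    (huf : ∀ t ∈ I, 0 < u t * deformationFactor k₁ k₂ k₃ t)
    (hw : ∀ t ∈ I, w t ≠ 0) (huv : ∀ t ∈ I, u t + v t * t ≠ 0) :
    (∀ t ∈ I,
      HasDerivWithinAt (fun t => w t ^ 2 * t / (u t + v t * t))
        (w t ^ 2 / (u t * deformationFactor k₁ k₂ k₃ t)) I t ∧
      0 < w t ^ 2 / (u t * deformationFactor k₁ k₂ k₃ t)) ∧
    StrictMonoOn (fun t => w t ^ 2 * t / (u t + v t * t)) I ∧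
    (∀ A : ℝ, ∀ B₁ ∈ I, ∀ B₂ ∈ I,
      w B₁ ^ 2 * B₁ / (u B₁ + v B₁ * B₁) = A →
      w B₂ ^ 2 * B₂ / (u B₂ + v B₂ * B₂) = A → B₁ = B₂) := by
  have hderiv t (ht : t ∈ I) := h.hasDerivWithinAt_sq_mul_self_div ht
    (left_ne_zero_of_mul (huf t ht).ne') (right_ne_zero_of_mul (huf t ht).ne') (huv t ht)
  have hpos t (ht : t ∈ I) : 0 < w t ^ 2 / (u t * deformationFactor k₁ k₂ k₃ t) :=
    div_pos (sq_pos_of_ne_zero (hw t ht)) (huf t ht)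
  have hmono : StrictMonoOn (fun t => w t ^ 2 * t / (u t + v t * t)) I :=
    strictMonoOn_of_hasDerivWithinAt_pos hI.convex
      (fun t ht => (hderiv t ht).continuousWithinAt)
      (fun t ht => (hderiv t (interior_subset ht)).mono interior_subset)
      (fun t ht => hpos t (interior_subset ht))
  exact ⟨fun t ht => ⟨hderiv t ht, hpos t ht⟩, hmono,
    fun A B₁ hB₁ B₂ hB₂ hA₁ hA₂ => hmono.injOn hB₁ hB₂ (hA₁.trans hA₂.symm)⟩

/-- for solutions `(u,v,w)` of the ODE system (3)-(5) of the paper on an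
interval `I ⊆ [0,∞)` with `f = 1+(k₁+k₃)t+k₂t² > 0`, `u > 0`, `w ≠ 0`, `u + vt > 0`,
the function `t ↦ w²t/(u+vt)` has derivative `w²/(uf) > 0`, is strictly increasing on `I`,
and for any constant `A` the equation `w(B)²B/(u(B)+v(B)B) = A` has at most one solution. -/
theorem stmt_5 (k₁ k₂ k₃ : ℝ) (I : Set ℝ) (hI : I ⊆ Ici 0) (hI' : I.OrdConnected)
    (u v w : ℝ → ℝ)
    (hf : ∀ t ∈ I, 0 < 1 + (k₁ + k₃) * t + k₂ * t ^ 2)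
    (hu : ∀ t ∈ I, 0 < u t)
    (hw : ∀ t ∈ I, w t ≠ 0)
    (huv : ∀ t ∈ I, 0 < u t + v t * t)
    (hdu : ∀ t ∈ I, HasDerivWithinAt u
      ((v t - k₁ * u t) / (1 + (k₁ + k₃) * t + k₂ * t ^ 2)) I t)
    (hdv : ∀ t ∈ I, HasDerivWithinAt v
      ((u t * (k₂ * u t - k₃ * v t - 2 * k₁ * v t) + 2 * v t ^ 2) /
        (u t * (1 + (k₁ + k₃) * t + k₂ * t ^ 2))) I t)
    (hdw : ∀ t ∈ I, HasDerivWithinAt w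
      (w t * (3 * v t - k₃ * u t - 2 * k₁ * u t) /
        (2 * u t * (1 + (k₁ + k₃) * t + k₂ * t ^ 2))) I t) :
    (∀ t ∈ I,
      HasDerivWithinAt (fun t => w t ^ 2 * t / (u t + v t * t))
        (w t ^ 2 / (u t * (1 + (k₁ + k₃) * t + k₂ * t ^ 2))) I t ∧
      0 < w t ^ 2 / (u t * (1 + (k₁ + k₃) * t + k₂ * t ^ 2))) ∧
    StrictMonoOn (fun t => w t ^ 2 * t / (u t + v t * t)) I ∧
    (∀ A : ℝ, ∀ B₁ ∈ I, ∀ B₂ ∈ I,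
      w B₁ ^ 2 * B₁ / (u B₁ + v B₁ * B₁) = A →
      w B₂ ^ 2 * B₂ / (u B₂ + v B₂ * B₂) = A → B₁ = B₂) := by
  exact stmt_5_general hI' ⟨hdu, hdv, hdw⟩ (fun t ht => mul_pos (hu t ht) (hf t ht)) hw
    fun t ht => (huv t ht).ne'
end

section
/- Let $k_1,k_2,k_3$ be real constants and let $I\subseteq[0,\infty)$ be an interval containing $0$ on which $f(t):=1+(k_1+k_3)t+k_2t^2>0$. Define $\sigma(t):=\tfrac{1}{2}\int_0^{t}\frac{k_2\theta+k_3}{1+(k_1+k_3)\theta+k_2\theta^2}\,d\theta$, and set $u(t):=e^{2\sigma(t)}$, $v(t):=(k_1+k_3+k_2t)\,u(t)$, $w(t):=\sqrt{f(t)}\,e^{\sigma(t)}$. Then $u,v,w$ satisfy on $I$ the ODE system $u'=\frac{v-k_1u}{f}$, $v'=\frac{u(k_2u-k_3v-2k_1v)+2v^2}{uf}$, $w'=\frac{w(3v-k_3u-2k_1u)}{2uf}$. -/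
open Set

/-- The function `σ(t) = (1/2)∫₀ᵗ (k₂θ+k₃)/(1+(k₁+k₃)θ+k₂θ²) dθ` from (22) of the paper. -/
noncomputable def sigmaFn (k₁ k₂ k₃ t : ℝ) : ℝ :=
  (1 / 2) * ∫ θ in (0:ℝ)..t, (k₂ * θ + k₃) / (1 + (k₁ + k₃) * θ + k₂ * θ ^ 2)

/-!
Write `f = 1 + (k₁ + k₃) t + k₂ t²` and `p = k₁ + k₃ + k₂ t`. Since `2 σ' = (p - k₁) / f`, the
function `u = e^{2σ}` solves the linear equation `u' = (p u - k₁ u) / f`. The other two equations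
follow for every solution `u` of this one: the one for `v = p u` because `f = 1 + t p`, so that
`k₂ f = k₂ + (p - k₁ - k₃) p`, and the one for `w = √(f u)` because
`f' = 2 p - k₁ - k₃`, so that `2 w' / w = f' / f + u' / u = (3 p - 2 k₁ - k₃) / f`.
-/

theorem hasDerivAt_integral_div {f g : ℝ → ℝ} {a t : ℝ} (hg : Continuous g) (hf : Continuous f)
    (hf_ne : ∀ s ∈ uIcc a t, f s ≠ 0) :
    HasDerivAt (fun x => ∫ θ in a..x, g θ / f θ) (g t / f t) t := by
  refine intervalIntegral.integral_hasDerivAt_right ?_ ?_ ?_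
  · exact (hg.continuousOn.div hf.continuousOn hf_ne).intervalIntegrable
  · exact (hg.measurable.div hf.measurable).stronglyMeasurable.stronglyMeasurableAtFilter
  · exact hg.continuousAt.div hf.continuousAt (hf_ne t right_mem_uIcc)

theorem hasDerivAt_sqrt_comp {g : ℝ → ℝ} {g' t : ℝ} (hg : HasDerivAt g g' t) (hpos : 0 < g t) :
    HasDerivAt (fun s => √(g s)) (√(g t) * g' / (2 * g t)) t := by
  refine (hg.sqrt hpos.ne').congr_deriv ?_
  have hsqrt_ne : √(g t) ≠ 0 := Real.sqrt_ne_zero'.mpr hpos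
  rw [div_eq_div_iff (mul_ne_zero two_ne_zero hsqrt_ne) (mul_ne_zero two_ne_zero hpos.ne')]
  linear_combination (-2 * g') * Real.mul_self_sqrt hpos.le

theorem sqrt_mul_exp_eq_sqrt (x y : ℝ) : √x * Real.exp y = √(x * Real.exp (2 * y)) := by
  rw [Real.sqrt_mul' _ (Real.exp_nonneg _), ← Real.exp_half, mul_div_cancel_left₀ y two_ne_zero]

section NormedField

variable {𝕜 : Type*} [NontriviallyNormedField 𝕜]

theorem hasDerivAt_affine (b c t : 𝕜) : HasDerivAt (fun s => b + c * s) c t := by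
  simpa only [mul_one] using ((hasDerivAt_id' t).const_mul c).const_add b

theorem hasDerivAt_quadratic (a b c t : 𝕜) :
    HasDerivAt (fun s => a + b * s + c * s ^ 2) (b + 2 * c * t) t := by
  refine ((hasDerivAt_affine a b t).add ((hasDerivAt_pow 2 t).const_mul c)).congr_deriv ?_
  push_cast
  ring

theorem hasDerivAt_affine_mul_of_ode {k₁ k₂ k₃ t : 𝕜} {u : 𝕜 → 𝕜} (hut : u t ≠ 0)
    (hft : 1 + (k₁ + k₃) * t + k₂ * t ^ 2 ≠ 0)
    (hu : HasDerivAt u (((k₁ + k₃ + k₂ * t) * u t - k₁ * u t) /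
      (1 + (k₁ + k₃) * t + k₂ * t ^ 2)) t) :
    HasDerivAt (fun s => (k₁ + k₃ + k₂ * s) * u s)
      ((u t * (k₂ * u t - k₃ * ((k₁ + k₃ + k₂ * t) * u t) -
          2 * k₁ * ((k₁ + k₃ + k₂ * t) * u t)) + 2 * ((k₁ + k₃ + k₂ * t) * u t) ^ 2) /
        (u t * (1 + (k₁ + k₃) * t + k₂ * t ^ 2))) t := by
  refine ((hasDerivAt_affine (k₁ + k₃) k₂ t).mul hu).congr_deriv ?_
  field_simp
  ring

end NormedField

theorem hasDerivAt_sqrt_quadratic_mul_of_ode {k₁ k₂ k₃ t : ℝ} {u : ℝ → ℝ} (hut : 0 < u t)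
    (hft : 0 < 1 + (k₁ + k₃) * t + k₂ * t ^ 2)
    (hu : HasDerivAt u (((k₁ + k₃ + k₂ * t) * u t - k₁ * u t) /
      (1 + (k₁ + k₃) * t + k₂ * t ^ 2)) t) :
    HasDerivAt (fun s => √((1 + (k₁ + k₃) * s + k₂ * s ^ 2) * u s))
      (√((1 + (k₁ + k₃) * t + k₂ * t ^ 2) * u t) *
          (3 * ((k₁ + k₃ + k₂ * t) * u t) - k₃ * u t - 2 * k₁ * u t) /
        (2 * u t * (1 + (k₁ + k₃) * t + k₂ * t ^ 2))) t := by
  have hfu := (hasDerivAt_quadratic 1 (k₁ + k₃) k₂ t).mul hu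
  refine (hasDerivAt_sqrt_comp hfu (mul_pos hft hut)).congr_deriv ?_
  rw [mul_div_cancel₀ _ hft.ne', Pi.mul_apply]
  ring

theorem hasDerivAt_sigmaFn {k₁ k₂ k₃ t : ℝ}
    (hf : ∀ s ∈ uIcc 0 t, 1 + (k₁ + k₃) * s + k₂ * s ^ 2 ≠ 0) :
    HasDerivAt (sigmaFn k₁ k₂ k₃)
      (1 / 2 * ((k₂ * t + k₃) / (1 + (k₁ + k₃) * t + k₂ * t ^ 2))) t :=
  (hasDerivAt_integral_div (g := fun θ => k₂ * θ + k₃) (by fun_prop) (by fun_prop) hf).const_mul _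

theorem hasDerivAt_exp_two_mul_sigmaFn {k₁ k₂ k₃ t : ℝ}
    (hf : ∀ s ∈ uIcc 0 t, 1 + (k₁ + k₃) * s + k₂ * s ^ 2 ≠ 0) :
    HasDerivAt (fun s => Real.exp (2 * sigmaFn k₁ k₂ k₃ s))
      (((k₁ + k₃ + k₂ * t) * Real.exp (2 * sigmaFn k₁ k₂ k₃ t) -
          k₁ * Real.exp (2 * sigmaFn k₁ k₂ k₃ t)) /
        (1 + (k₁ + k₃) * t + k₂ * t ^ 2)) t := by
  refine ((hasDerivAt_sigmaFn hf).const_mul 2).exp.congr_deriv ?_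
  ring

theorem stmt_6_general (k₁ k₂ k₃ : ℝ) (I : Set ℝ) (hI : I.OrdConnected) (h0 : (0 : ℝ) ∈ I)
    (hf : ∀ t ∈ I, 0 < 1 + (k₁ + k₃) * t + k₂ * t ^ 2)
    (u v w : ℝ → ℝ)
    (hu : u = fun t => Real.exp (2 * sigmaFn k₁ k₂ k₃ t))
    (hv : v = fun t => (k₁ + k₃ + k₂ * t) * u t)
    (hw : w = fun t => √(1 + (k₁ + k₃) * t + k₂ * t ^ 2) *
      Real.exp (sigmaFn k₁ k₂ k₃ t)) :
    (∀ t ∈ I, HasDerivAt u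
      ((v t - k₁ * u t) / (1 + (k₁ + k₃) * t + k₂ * t ^ 2)) t) ∧
    (∀ t ∈ I, HasDerivAt v
      ((u t * (k₂ * u t - k₃ * v t - 2 * k₁ * v t) + 2 * v t ^ 2) /
        (u t * (1 + (k₁ + k₃) * t + k₂ * t ^ 2))) t) ∧
    (∀ t ∈ I, HasDerivAt w
      (w t * (3 * v t - k₃ * u t - 2 * k₁ * u t) /
        (2 * u t * (1 + (k₁ + k₃) * t + k₂ * t ^ 2))) t) := by
  have hf_ne : ∀ t ∈ I, ∀ s ∈ uIcc 0 t, 1 + (k₁ + k₃) * s + k₂ * s ^ 2 ≠ 0 :=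
    fun t ht s hs => (hf s (hI.uIcc_subset h0 ht hs)).ne'
  have hu_pos : ∀ t, 0 < u t := fun t => hu ▸ Real.exp_pos _
  have hu_deriv : ∀ t ∈ I, HasDerivAt u (((k₁ + k₃ + k₂ * t) * u t - k₁ * u t) /
      (1 + (k₁ + k₃) * t + k₂ * t ^ 2)) t :=
    fun t ht => hu ▸ hasDerivAt_exp_two_mul_sigmaFn (hf_ne t ht)
  have hw_sqrt : w = fun t => √((1 + (k₁ + k₃) * t + k₂ * t ^ 2) * u t) := by
    simp only [hw, hu, sqrt_mul_exp_eq_sqrt]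
  subst hv hw_sqrt
  exact ⟨hu_deriv,
    fun t ht => hasDerivAt_affine_mul_of_ode (hu_pos t).ne' (hf t ht).ne' (hu_deriv t ht),
    fun t ht => hasDerivAt_sqrt_quadratic_mul_of_ode (hu_pos t) (hf t ht) (hu_deriv t ht)⟩

/-- the specific choice `u = e^{2σ}`, `v = (k₁+k₃+k₂t)u`,
`w = √(f) e^{σ}` (formula (22) of the paper) solves the ODE system (3)-(5). -/
theorem stmt_6 (k₁ k₂ k₃ : ℝ) (I : Set ℝ) (hI : I ⊆ Ici 0) (hI' : I.OrdConnected)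
    (h0 : (0:ℝ) ∈ I)
    (hf : ∀ t ∈ I, 0 < 1 + (k₁ + k₃) * t + k₂ * t ^ 2)
    (u v w : ℝ → ℝ)
    (hu : u = fun t => Real.exp (2 * sigmaFn k₁ k₂ k₃ t))
    (hv : v = fun t => (k₁ + k₃ + k₂ * t) * u t)
    (hw : w = fun t => Real.sqrt (1 + (k₁ + k₃) * t + k₂ * t ^ 2) *
      Real.exp (sigmaFn k₁ k₂ k₃ t)) :
    (∀ t ∈ I, HasDerivWithinAt u
      ((v t - k₁ * u t) / (1 + (k₁ + k₃) * t + k₂ * t ^ 2)) I t) ∧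
    (∀ t ∈ I, HasDerivWithinAt v
      ((u t * (k₂ * u t - k₃ * v t - 2 * k₁ * v t) + 2 * v t ^ 2) /
        (u t * (1 + (k₁ + k₃) * t + k₂ * t ^ 2))) I t) ∧
    (∀ t ∈ I, HasDerivWithinAt w
      (w t * (3 * v t - k₃ * u t - 2 * k₁ * u t) /
        (2 * u t * (1 + (k₁ + k₃) * t + k₂ * t ^ 2))) I t) := by
  obtain ⟨hu', hv', hw'⟩ := stmt_6_general k₁ k₂ k₃ I hI' h0 hf u v w hu hv hw
  exact ⟨fun t ht => (hu' t ht).hasDerivWithinAt, fun t ht => (hv' t ht).hasDerivWithinAt,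
    fun t ht => (hw' t ht).hasDerivWithinAt⟩
end

section
/- Let $\mu>0$ and $\delta\ge0$ be real constants, set $t_o:=\frac{2\delta}{\sqrt{4\delta^2+\mu^2}}$, $\xi:=\delta^2\mu^{-1}+\mu/4$, and let $\widetilde{D}:=\{(s,t)\in\mathbb{R}^2: 0\le t\le t_o,\ |s|\le t\}$ and $\widetilde{R}(s,t):=4\xi\Big(\frac{1-t^2}{1+s}\Big)^3$. Then $\min_{(s,t)\in\widetilde{D}}\widetilde{R}(s,t)=\dfrac{(\sqrt{4\delta^2+\mu^2}-2\delta)^3}{\mu\sqrt{4\delta^2+\mu^2}}$ and $\max_{(s,t)\in\widetilde{D}}\widetilde{R}(s,t)=\dfrac{(\sqrt{4\delta^2+\mu^2}+2\delta)^3}{\mu\sqrt{4\delta^2+\mu^2}}$. -/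
/-!
For `|s| ≤ t < 1` the quotient `(1 - t²) / (1 + s)` is decreasing in `s`, so it lies between its
values `1 - t` at `s = t` and `1 + t` at `s = -t`. Along the two edges `t = |s|` it equals `1 - s`,
so over `t ≤ T` it takes exactly the values in `[1 - T, 1 + T]`. Since `x ↦ 4ξx³` is increasing,
its extrema are `4ξ(1 ∓ T)³`.
-/

theorem one_sub_sq_div_one_add {K : Type*} [Field K] {x : K} (hx : 1 + x ≠ 0) :
    (1 - x ^ 2) / (1 + x) = 1 - x := by
  rw [div_eq_iff hx]
  ring

section EndpointValues

variable {K : Type*} [Field K] [CharZero K] {μ δ r : K}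

theorem four_mul_mul_one_sub_div_pow_three (hμ : μ ≠ 0) (hr : r ≠ 0)
    (hr_sq : r ^ 2 = 4 * δ ^ 2 + μ ^ 2) :
    4 * (δ ^ 2 * μ⁻¹ + μ / 4) * (1 - 2 * δ / r) ^ 3 = (r - 2 * δ) ^ 3 / (μ * r) := by
  have hcoef : 4 * (δ ^ 2 * μ⁻¹ + μ / 4) = r ^ 2 / μ := by
    rw [hr_sq]
    field_simp
  rw [hcoef]
  field_simp

theorem four_mul_mul_one_add_div_pow_three (hμ : μ ≠ 0) (hr : r ≠ 0)
    (hr_sq : r ^ 2 = 4 * δ ^ 2 + μ ^ 2) :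
    4 * (δ ^ 2 * μ⁻¹ + μ / 4) * (1 + 2 * δ / r) ^ 3 = (r + 2 * δ) ^ 3 / (μ * r) := by
  simpa only [neg_sq, mul_neg, neg_div, sub_neg_eq_add] using
    four_mul_mul_one_sub_div_pow_three (δ := -δ) hμ hr (by rwa [neg_sq])

end EndpointValues

section TruncatedCone

variable {K : Type*} [Field K] [LinearOrder K] [IsStrictOrderedRing K]

/-- The cone `|s| ≤ t` truncated at height `T`: the domain `D̃` of the paper for `T = t_o`.
Points are encoded as `(s, t)`, with the height as second coordinate. -/
def truncatedCone (T : K) : Set (K × K) :=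
  {p | 0 ≤ p.2 ∧ p.2 ≤ T ∧ |p.1| ≤ p.2}

theorem one_sub_sq_div_one_add_mem_Icc {s t : K} (hst : |s| ≤ t) (ht : t < 1) :
    (1 - t ^ 2) / (1 + s) ∈ Set.Icc (1 - t) (1 + t) := by
  obtain ⟨hneg, hle⟩ := abs_le.mp hst
  have hpos : 0 < 1 + s := by linarith
  have hnum : 0 ≤ 1 - t ^ 2 := by nlinarith
  constructor
  · calc
      1 - t = (1 - t ^ 2) / (1 + t) := (one_sub_sq_div_one_add (by linarith)).symm
      _ ≤ (1 - t ^ 2) / (1 + s) := by gcongr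
  · calc
      (1 - t ^ 2) / (1 + s) ≤ (1 - t ^ 2) / (1 + -t) := by gcongr; linarith
      _ = 1 + t := by
        rw [← neg_sq t, one_sub_sq_div_one_add (by linarith), sub_neg_eq_add]

theorem image_one_sub_sq_div_one_add_truncatedCone {T : K} (hT : T < 1) :
    (fun p : K × K => (1 - p.2 ^ 2) / (1 + p.1)) '' truncatedCone T =
      Set.Icc (1 - T) (1 + T) := by
  apply Set.Subset.antisymm
  · rintro _ ⟨⟨s, t⟩, ⟨-, htT, hst⟩, rfl⟩
    exact Set.Icc_subset_Icc (by linarith) (by linarith)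
      (one_sub_sq_div_one_add_mem_Icc hst (htT.trans_lt hT))
  · rintro y ⟨hy_ge, hy_le⟩
    refine ⟨(1 - y, |1 - y|), ⟨abs_nonneg _, abs_le.mpr ⟨by linarith, by linarith⟩, le_rfl⟩, ?_⟩
    simp only [sq_abs]
    rw [one_sub_sq_div_one_add (by linarith), sub_sub_cancel]

section Extrema

variable {β : Type*} [Preorder β] {f : K → β} {T : K}

theorem isLeast_image_truncatedCone (hf : Monotone f) (hT₀ : 0 ≤ T) (hT₁ : T < 1) :
    IsLeast ((fun p : K × K => f ((1 - p.2 ^ 2) / (1 + p.1))) '' truncatedCone T)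
      (f (1 - T)) := by
  rw [← Set.image_image f, image_one_sub_sq_div_one_add_truncatedCone hT₁]
  exact hf.map_isLeast (isLeast_Icc (by linarith))

theorem isGreatest_image_truncatedCone (hf : Monotone f) (hT₀ : 0 ≤ T) (hT₁ : T < 1) :
    IsGreatest ((fun p : K × K => f ((1 - p.2 ^ 2) / (1 + p.1))) '' truncatedCone T)
      (f (1 + T)) := by
  rw [← Set.image_image f, image_one_sub_sq_div_one_add_truncatedCone hT₁]
  exact hf.map_isGreatest (isGreatest_Icc (by linarith))

end Extrema

theorem monotone_const_mul_odd_pow {c : K} (hc : 0 ≤ c) {n : ℕ} (hn : Odd n) :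
    Monotone fun x : K => c * x ^ n :=
  hn.strictMono_pow.monotone.const_mul hc

end TruncatedCone

/-- the min and max of
`R̃(s,t) = 4ξ((1-t²)/(1+s))³` on `D̃ = {0 ≤ t ≤ t_o, |s| ≤ t}` with
`t_o = 2δ/√(4δ²+μ²)` and `ξ = δ²/μ + μ/4` are
`(√(4δ²+μ²) ∓ 2δ)³/(μ√(4δ²+μ²))` (formula (13) of Theorem 1.3(iii)). -/
theorem stmt_13 (μ δ : ℝ) (hμ : 0 < μ) (hδ : 0 ≤ δ) :
    IsLeast
      ((fun p : ℝ × ℝ =>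
          4 * (δ ^ 2 * μ⁻¹ + μ / 4) * ((1 - p.2 ^ 2) / (1 + p.1)) ^ 3) ''
        {p : ℝ × ℝ | 0 ≤ p.2 ∧ p.2 ≤ 2 * δ / Real.sqrt (4 * δ ^ 2 + μ ^ 2) ∧
          |p.1| ≤ p.2})
      ((Real.sqrt (4 * δ ^ 2 + μ ^ 2) - 2 * δ) ^ 3 /
        (μ * Real.sqrt (4 * δ ^ 2 + μ ^ 2))) ∧
    IsGreatest
      ((fun p : ℝ × ℝ =>
          4 * (δ ^ 2 * μ⁻¹ + μ / 4) * ((1 - p.2 ^ 2) / (1 + p.1)) ^ 3) ''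
        {p : ℝ × ℝ | 0 ≤ p.2 ∧ p.2 ≤ 2 * δ / Real.sqrt (4 * δ ^ 2 + μ ^ 2) ∧
          |p.1| ≤ p.2})
      ((Real.sqrt (4 * δ ^ 2 + μ ^ 2) + 2 * δ) ^ 3 /
        (μ * Real.sqrt (4 * δ ^ 2 + μ ^ 2))) := by
  have hr_pos : 0 < Real.sqrt (4 * δ ^ 2 + μ ^ 2) := Real.sqrt_pos.mpr (by positivity)
  have hr_sq : Real.sqrt (4 * δ ^ 2 + μ ^ 2) ^ 2 = 4 * δ ^ 2 + μ ^ 2 :=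
    Real.sq_sqrt (by positivity)
  have hT_nonneg : 0 ≤ 2 * δ / Real.sqrt (4 * δ ^ 2 + μ ^ 2) := by positivity
  have hT_lt_one : 2 * δ / Real.sqrt (4 * δ ^ 2 + μ ^ 2) < 1 :=
    (div_lt_one hr_pos).mpr (Real.lt_sqrt_of_sq_lt (by nlinarith))
  have hmono : Monotone fun x : ℝ => 4 * (δ ^ 2 * μ⁻¹ + μ / 4) * x ^ 3 :=
    monotone_const_mul_odd_pow (by positivity) (by decide)
  rw [← four_mul_mul_one_sub_div_pow_three hμ.ne' hr_pos.ne' hr_sq,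
    ← four_mul_mul_one_add_div_pow_three hμ.ne' hr_pos.ne' hr_sq]
  exact ⟨isLeast_image_truncatedCone hmono hT_nonneg hT_lt_one,
    isGreatest_image_truncatedCone hmono hT_nonneg hT_lt_one⟩
end

section
/- Let $\mu>0$ and $\delta\ge0$ be real constants, set $t_o:=\frac{2\delta}{\sqrt{4\delta^2+\mu^2}}$, $\xi:=\delta^2\mu^{-1}+\mu/4$, and let $\widetilde{D}:=\{(s,t)\in\mathbb{R}^2: 0\le t\le t_o,\ |s|\le t\}$ and $\widetilde{R}(s,t):=4\xi\Big(\frac{1-t^2}{1+s}\Big)^3$. Then there is a positive constant $\kappa=\dfrac{(\sqrt{4\delta^2+\mu^2}-2\delta)^3}{\mu\sqrt{4\delta^2+\mu^2}}>0$ such that $\widetilde{R}(s,t)\ge\kappa$ for all $(s,t)\in\widetilde{D}$. -/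
/-!
Since `s ≤ t` gives `1 + s ≤ 1 + t`, the base `(1 - t ^ 2) / (1 + s)` is at least `1 - t`, with
equality when `s = t`. As `1 - t` decreases in `t`, the minimum of `R̃` over the triangle `D̃` is
attained at the corner `s = t = t_o`, and `κ` is the value of `R̃` there: it simplifies because
`4 ξ = (4 δ ^ 2 + μ ^ 2) / μ`.
-/

namespace SquareMetric

section OrderedField

variable {K : Type*} [Field K]

/-- The scalar flag curvature `R̃(s, t)` of a projectively flat square metric, in terms of
`s = β / α` and a second variable `t` that bounds `|s|`. The coefficient `ξ` is arbitrary here. -/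
def flagCurvature (ξ s t : K) : K :=
  4 * ξ * ((1 - t ^ 2) / (1 + s)) ^ 3

theorem flagCurvature_self (ξ : K) {t : K} (ht : 1 + t ≠ 0) :
    flagCurvature ξ t t = 4 * ξ * (1 - t) ^ 3 := by
  have hfactor : 1 - t ^ 2 = (1 - t) * (1 + t) := by ring
  rw [flagCurvature, hfactor, mul_div_cancel_right₀ _ ht]

theorem four_mul_coeff_mul_one_sub_pow_three {μ δ r : K} [NeZero (4 : K)] (hμ : μ ≠ 0)
    (hr : r ≠ 0) (hr_sq : r ^ 2 = 4 * δ ^ 2 + μ ^ 2) :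
    4 * (δ ^ 2 * μ⁻¹ + μ / 4) * (1 - 2 * δ / r) ^ 3 = (r - 2 * δ) ^ 3 / (μ * r) := by
  have h4 : (4 : K) ≠ 0 := NeZero.ne 4
  have hcoeff : 4 * (δ ^ 2 * μ⁻¹ + μ / 4) = r ^ 2 / μ := by
    rw [hr_sq]
    field_simp
  rw [hcoeff]
  field_simp

variable [LinearOrder K] [IsStrictOrderedRing K] {ξ a s t : K}

theorem one_sub_le_one_sub_sq_div_one_add (hs : -1 < s) (hst : s ≤ t) (ht : t ≤ 1) :
    1 - t ≤ (1 - t ^ 2) / (1 + s) := by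
  have hs_pos : 0 < 1 + s := neg_lt_iff_pos_add'.mp hs
  rw [le_div_iff₀ hs_pos]
  calc (1 - t) * (1 + s) ≤ (1 - t) * (1 + t) :=
      mul_le_mul_of_nonneg_left (by gcongr) (sub_nonneg.mpr ht)
    _ = 1 - t ^ 2 := by ring

theorem flagCurvature_self_le (hξ : 0 ≤ ξ) (hs : -1 < s) (hst : s ≤ t) (hta : t ≤ a)
    (ha : a ≤ 1) : flagCurvature ξ a a ≤ flagCurvature ξ s t := by
  have ha_ne : 1 + a ≠ 0 := by linarith
  have hbase : 1 - a ≤ (1 - t ^ 2) / (1 + s) :=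
    (sub_le_sub_left hta 1).trans (one_sub_le_one_sub_sq_div_one_add hs hst (hta.trans ha))
  rw [flagCurvature_self ξ ha_ne, flagCurvature]
  exact mul_le_mul_of_nonneg_left (pow_le_pow_left₀ (sub_nonneg.mpr ha) hbase 3) (by positivity)

end OrderedField

theorem two_mul_lt_sqrt_four_mul_sq_add_sq (δ : ℝ) {μ : ℝ} (hμ : μ ≠ 0) :
    2 * δ < √(4 * δ ^ 2 + μ ^ 2) := by
  apply Real.lt_sqrt_of_sq_lt
  calc (2 * δ) ^ 2 = 4 * δ ^ 2 := by ring
    _ < 4 * δ ^ 2 + μ ^ 2 := lt_add_of_pos_right _ (by positivity)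

end SquareMetric

/-- Corollary 1.4: the flag-curvature function
`R̃(s,t) = 4ξ((1-t²)/(1+s))³` of the projectively flat square metric admits the positive
lower bound `κ = (√(4δ²+μ²)-2δ)³/(μ√(4δ²+μ²))` on `D̃ = {0 ≤ t ≤ t_o, |s| ≤ t}`. -/
theorem stmt_14 (μ δ : ℝ) (hμ : 0 < μ) (hδ : 0 ≤ δ) :
    0 < (Real.sqrt (4 * δ ^ 2 + μ ^ 2) - 2 * δ) ^ 3 /
        (μ * Real.sqrt (4 * δ ^ 2 + μ ^ 2)) ∧
    ∀ s t : ℝ, 0 ≤ t → t ≤ 2 * δ / Real.sqrt (4 * δ ^ 2 + μ ^ 2) → |s| ≤ t →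
      (Real.sqrt (4 * δ ^ 2 + μ ^ 2) - 2 * δ) ^ 3 /
          (μ * Real.sqrt (4 * δ ^ 2 + μ ^ 2))
        ≤ 4 * (δ ^ 2 * μ⁻¹ + μ / 4) * ((1 - t ^ 2) / (1 + s)) ^ 3 := by
  have hr_sq : √(4 * δ ^ 2 + μ ^ 2) ^ 2 = 4 * δ ^ 2 + μ ^ 2 := Real.sq_sqrt (by positivity)
  have hr_pos : 0 < √(4 * δ ^ 2 + μ ^ 2) := Real.sqrt_pos.mpr (by positivity)
  have hδr : 2 * δ < √(4 * δ ^ 2 + μ ^ 2) :=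
    SquareMetric.two_mul_lt_sqrt_four_mul_sq_add_sq δ hμ.ne'
  have ht₀_lt : 2 * δ / √(4 * δ ^ 2 + μ ^ 2) < 1 := (div_lt_one hr_pos).mpr hδr
  refine ⟨div_pos (pow_pos (sub_pos.mpr hδr) 3) (mul_pos hμ hr_pos), fun s t _ ht₀ hst_abs => ?_⟩
  obtain ⟨h_neg_t_le_s, hst⟩ := abs_le.mp hst_abs
  have ht₀_ne : 1 + 2 * δ / √(4 * δ ^ 2 + μ ^ 2) ≠ 0 := by positivity
  rw [← SquareMetric.four_mul_coeff_mul_one_sub_pow_three hμ.ne' hr_pos.ne' hr_sq,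
    ← SquareMetric.flagCurvature_self _ ht₀_ne]
  exact SquareMetric.flagCurvature_self_le (by positivity) (by linarith) hst ht₀ ht₀_lt.le
end

section
/- Let $\mu>0$ and $\delta>0$ be real constants and set $t_o:=\frac{2\delta}{\sqrt{4\delta^2+\mu^2}}$. Define $\varphi(t):=\dfrac{(1-t^2)^3\big[(7\mu^2+40\delta^2)t^2+\mu^2-8\delta^2\big]}{\mu(1+t^2)^4}$ for $0\le t\le t_o$. Then the equation $\varphi'(t)=0$ has exactly one solution in the open interval $(0,t_o)$, namely $t_1=\frac{\sqrt{2}\,\delta}{\sqrt{\mu^2+6\delta^2}}$; in particular $0<t_1<t_o$. -/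
open Set

/-!
In the variable `w = (1 - t²) / (1 + t²)`, which decreases in `t ≥ 0` from `1` through `0` at
`t = 1`, the function `φ` becomes the quartic `w³ (4p - 3qw) / μ` with `p = μ² + 4δ²` and
`q = μ² + 8δ²`. Its critical points are `w = 0` and `w = p / q`. These are the values of `w` at
`t = 1` and at `t = t₁`, while `w = μ² / q` at `t_o`, so `μ² < p` and `0 < μ²` order the three
points as `t₁ < t_o < 1`.
-/

/-- The Cayley transform `(1 - t²) / (1 + t²)` of `t²`, the variable in which `φ` is a
polynomial. -/
noncomputable def cayleySq (t : ℝ) : ℝ := (1 - t ^ 2) / (1 + t ^ 2)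

theorem cayleySq_one : cayleySq 1 = 0 := by simp [cayleySq]

theorem cayleySq_div_sqrt (a : ℝ) {b : ℝ} (hb : 0 < b) :
    cayleySq (a / √b) = (b - a ^ 2) / (b + a ^ 2) := by
  rw [cayleySq, div_pow, Real.sq_sqrt hb.le]
  field_simp

theorem strictAntiOn_cayleySq : StrictAntiOn cayleySq (Ici 0) := by
  intro s hs t _ hst
  have hsq : s ^ 2 < t ^ 2 := pow_lt_pow_left₀ hst hs two_ne_zero
  rw [cayleySq, cayleySq, div_lt_div_iff₀ (by positivity) (by positivity)]
  linarith

theorem hasDerivAt_cayleySq (t : ℝ) : HasDerivAt cayleySq (-4 * t / (1 + t ^ 2) ^ 2) t := by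
  have hsq : HasDerivAt (fun x : ℝ => x ^ 2) (2 * t) t := by simpa using hasDerivAt_pow 2 t
  refine ((hsq.const_sub 1).fun_div (hsq.const_add 1) (by positivity)).congr_deriv ?_
  ring

theorem deriv_comp_cayleySq_eq_zero_iff {F : Type*} [NormedAddCommGroup F] [NormedSpace ℝ F]
    {f : ℝ → F} {t : ℝ} (ht : t ≠ 0) (hf : DifferentiableAt ℝ f (cayleySq t)) :
    deriv (f ∘ cayleySq) t = 0 ↔ deriv f (cayleySq t) = 0 := by
  have hw : -4 * t / (1 + t ^ 2) ^ 2 ≠ 0 :=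
    div_ne_zero (mul_ne_zero (by norm_num) ht) (by positivity)
  rw [(hf.hasDerivAt.scomp t (hasDerivAt_cayleySq t)).deriv, smul_eq_zero_iff_right hw]

theorem one_sub_sq_pow_mul_div_one_add_sq_pow (n : ℕ) (A B x : ℝ) :
    (1 - x ^ 2) ^ n * (A * x ^ 2 + B) / (1 + x ^ 2) ^ (n + 1) =
      cayleySq x ^ n * (A + B - (A - B) * cayleySq x) / 2 := by
  rw [cayleySq, div_pow]
  field_simp
  ring

section

variable {𝕜 : Type*} [NontriviallyNormedField 𝕜]

theorem hasDerivAt_pow_mul_sub_mul_div (n : ℕ) (a b c w : 𝕜) :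
    HasDerivAt (fun x => x ^ (n + 1) * (a - b * x) / c)
      (w ^ n * ((n + 1) * a - (n + 2) * b * w) / c) w := by
  have hlin : HasDerivAt (fun x => a - b * x) (-b) w := by
    simpa using ((hasDerivAt_id w).const_mul b).const_sub a
  refine (((hasDerivAt_pow (n + 1) w).fun_mul hlin).div_const c).congr_deriv ?_
  push_cast [Nat.add_sub_cancel]
  ring

theorem deriv_pow_mul_sub_mul_div_eq_zero_iff {n : ℕ} (hn : n ≠ 0) (a b : 𝕜) {c : 𝕜} (hc : c ≠ 0)
    (w : 𝕜) :
    deriv (fun x => x ^ (n + 1) * (a - b * x) / c) w = 0 ↔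
      w = 0 ∨ (n + 1) * a = (n + 2) * b * w := by
  rw [(hasDerivAt_pow_mul_sub_mul_div n a b c w).deriv, div_eq_zero_iff, or_iff_left hc,
    mul_eq_zero, pow_eq_zero_iff hn, sub_eq_zero]

end

/-- The function `φ` of the theorem: the two-variable flag curvature function of the metric
`α + β² / α`, restricted to the boundary `|s| = t`. -/
noncomputable def boundaryCurvature (μ δ t : ℝ) : ℝ :=
  ((1 - t ^ 2) ^ 3 * ((7 * μ ^ 2 + 40 * δ ^ 2) * t ^ 2 + μ ^ 2 - 8 * δ ^ 2)) /
    (μ * (1 + t ^ 2) ^ 4)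

theorem boundaryCurvature_eq_comp_cayleySq (μ δ : ℝ) :
    boundaryCurvature μ δ =
      (fun w => w ^ 3 * (4 * (μ ^ 2 + 4 * δ ^ 2) - 3 * (μ ^ 2 + 8 * δ ^ 2) * w) / μ) ∘
        cayleySq := by
  funext t
  rw [boundaryCurvature, add_sub_assoc, mul_comm μ, ← div_div,
    one_sub_sq_pow_mul_div_one_add_sq_pow 3, Function.comp_apply]
  ring

theorem deriv_boundaryCurvature_eq_zero_iff {μ t : ℝ} (δ : ℝ) (hμ : μ ≠ 0) (ht : t ≠ 0) :
    deriv (boundaryCurvature μ δ) t = 0 ↔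
      cayleySq t = (μ ^ 2 + 4 * δ ^ 2) / (μ ^ 2 + 8 * δ ^ 2) ∨ cayleySq t = 0 := by
  have hq : μ ^ 2 + 8 * δ ^ 2 ≠ 0 := by positivity
  rw [boundaryCurvature_eq_comp_cayleySq, deriv_comp_cayleySq_eq_zero_iff ht
      (hasDerivAt_pow_mul_sub_mul_div 2 _ _ _ _).differentiableAt,
    deriv_pow_mul_sub_mul_div_eq_zero_iff two_ne_zero _ _ hμ, or_comm, eq_div_iff hq]
  refine or_congr_left ?_
  push_cast
  constructor <;> intro h <;> linarith

theorem cayleySq_two_mul_div_sqrt {δ : ℝ} (hδ : δ ≠ 0) (μ : ℝ) :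
    cayleySq (2 * δ / √(4 * δ ^ 2 + μ ^ 2)) = μ ^ 2 / (μ ^ 2 + 8 * δ ^ 2) := by
  rw [cayleySq_div_sqrt _ (by positivity)]
  ring

theorem cayleySq_sqrt_two_mul_div_sqrt {δ : ℝ} (hδ : δ ≠ 0) (μ : ℝ) :
    cayleySq (√2 * δ / √(μ ^ 2 + 6 * δ ^ 2)) =
      (μ ^ 2 + 4 * δ ^ 2) / (μ ^ 2 + 8 * δ ^ 2) := by
  rw [cayleySq_div_sqrt _ (by positivity), mul_pow, Real.sq_sqrt zero_le_two]
  ring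

theorem stmt_17_general (μ δ t_o t₁ : ℝ) (hμ : μ ≠ 0) (hδ : 0 < δ)
    (hto : t_o = 2 * δ / √(4 * δ ^ 2 + μ ^ 2)) (ht₁ : t₁ = √2 * δ / √(μ ^ 2 + 6 * δ ^ 2)) :
    (0 < t₁ ∧ t₁ < t_o ∧ t_o < 1) ∧
      ∀ t > 0, (deriv (boundaryCurvature μ δ) t = 0 ↔ t = t₁ ∨ t = 1) := by
  have hto_pos : 0 < t_o := by rw [hto]; positivity
  have ht₁_pos : 0 < t₁ := by rw [ht₁]; positivity
  have hwo : cayleySq t_o = μ ^ 2 / (μ ^ 2 + 8 * δ ^ 2) := hto ▸ cayleySq_two_mul_div_sqrt hδ.ne' μ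
  have hw₁ : cayleySq t₁ = (μ ^ 2 + 4 * δ ^ 2) / (μ ^ 2 + 8 * δ ^ 2) :=
    ht₁ ▸ cayleySq_sqrt_two_mul_div_sqrt hδ.ne' μ
  have hlt_to : t₁ < t_o := by
    rw [← strictAntiOn_cayleySq.lt_iff_gt hto_pos.le ht₁_pos.le, hwo, hw₁]
    gcongr
    exact lt_add_of_pos_right _ (by positivity)
  have hto_lt : t_o < 1 := by
    rw [← strictAntiOn_cayleySq.lt_iff_gt (mem_Ici.2 zero_le_one) hto_pos.le, hwo, cayleySq_one]
    positivity
  refine ⟨⟨ht₁_pos, hlt_to, hto_lt⟩, fun t ht => ?_⟩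
  rw [deriv_boundaryCurvature_eq_zero_iff δ hμ ht.ne', ← hw₁, ← cayleySq_one,
    strictAntiOn_cayleySq.injOn.eq_iff ht.le ht₁_pos.le,
    strictAntiOn_cayleySq.injOn.eq_iff ht.le (mem_Ici.2 zero_le_one)]

/-- for `φ(t) = (1-t²)³[(7μ²+40δ²)t²+μ²-8δ²]/(μ(1+t²)⁴)`,
the equation `φ'(t) = 0` has exactly one solution in `(0, t_o)`, namely
`t₁ = √2δ/√(μ²+6δ²)`, where `t_o = 2δ/√(4δ²+μ²)`; in particular `0 < t₁ < t_o`. -/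
theorem stmt_17 (μ δ t_o t₁ : ℝ) (hμ : 0 < μ) (hδ : 0 < δ)
    (hto : t_o = 2 * δ / Real.sqrt (4 * δ ^ 2 + μ ^ 2))
    (ht₁ : t₁ = Real.sqrt 2 * δ / Real.sqrt (μ ^ 2 + 6 * δ ^ 2)) :
    (0 < t₁ ∧ t₁ < t_o) ∧
    ∀ t ∈ Ioo (0:ℝ) t_o,
      (deriv (fun x : ℝ =>
          ((1 - x ^ 2) ^ 3 * ((7 * μ ^ 2 + 40 * δ ^ 2) * x ^ 2 + μ ^ 2 - 8 * δ ^ 2)) /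
            (μ * (1 + x ^ 2) ^ 4)) t = 0 ↔ t = t₁) := by
  obtain ⟨⟨ht₁_pos, hlt_to, hto_lt⟩, hcrit⟩ := stmt_17_general μ δ t_o t₁ hμ.ne' hδ hto ht₁
  exact ⟨⟨ht₁_pos, hlt_to⟩, fun t ht => (hcrit t ht.1).trans (or_iff_left (ht.2.trans hto_lt).ne)⟩
end

section
/- Let $\mu>0$ and $\delta>0$ be real constants with $\mu^2>12\delta^2$, and set $t_o:=\frac{2\delta}{\sqrt{\mu^2-4\delta^2}}$. Define $\lambda(t):=\dfrac{(1+t^2)^3\big[(40\delta^2-7\mu^2)t^2+\mu^2+8\delta^2\big]}{\mu(1-t^2)^4}$ for $0\le t\le t_o$ (note $t_o<1$). Then the equation $\lambda'(t)=0$ has exactly one solution in the open interval $(0,t_o)$, namely $t_1=\frac{\sqrt{2}\,\delta}{\sqrt{\mu^2-6\delta^2}}$; in particular $0<t_1<t_o$. -/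
open Set

/-!
In the variable `u = t ^ 2` the function `λ` is, up to the factor `1 / μ`, of the form
`(1 + u) ^ n * (A * u + B) / (1 - u) ^ (n + 1)` with `n = 3`. Because the two exponents differ by
one, the `u ^ 2` terms in the numerator of the derivative cancel, so that apart from powers of
`1 + u` and `1 - u` only a linear factor in `u` remains. Its root is `t₁ ^ 2`.
-/

theorem hasDerivAt_one_add_pow_mul_linear_div_one_sub_pow {𝕜 : Type*} [NontriviallyNormedField 𝕜]
    (A B : 𝕜) (n : ℕ) {u : 𝕜} (hu : 1 - u ≠ 0) :
    HasDerivAt (fun v ↦ (1 + v) ^ (n + 1) * (A * v + B) / (1 - v) ^ (n + 2))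
      ((1 + u) ^ n * (((2 * n + 3) * A + B) * u + ((2 * n + 3) * B + A)) / (1 - u) ^ (n + 3))
      u := by
  have hadd : HasDerivAt (fun v ↦ (1 + v) ^ (n + 1)) ((n + 1) * (1 + u) ^ n) u := by
    simpa using ((hasDerivAt_id' u).const_add 1).fun_pow (n + 1)
  have hsub : HasDerivAt (fun v ↦ (1 - v) ^ (n + 2)) (-((n + 2) * (1 - u) ^ (n + 1))) u := by
    simpa using ((hasDerivAt_id' u).const_sub 1).fun_pow (n + 2)
  have hlin : HasDerivAt (fun v ↦ A * v + B) A u := by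
    simpa using ((hasDerivAt_id' u).const_mul A).add_const B
  refine ((hadd.fun_mul hlin).fun_div hsub (pow_ne_zero _ hu)).congr_deriv ?_
  field_simp
  ring

/-- The function `λ` of the paper: the flag curvature of `α - β ^ 2 / α` on the boundary `s = ± t`.
It takes the junk value `0` where `t ^ 2 = 1` or `μ = 0`. -/
noncomputable def boundaryFlagCurvature (μ δ t : ℝ) : ℝ :=
  ((1 + t ^ 2) ^ 3 * ((40 * δ ^ 2 - 7 * μ ^ 2) * t ^ 2 + μ ^ 2 + 8 * δ ^ 2)) /
    (μ * (1 - t ^ 2) ^ 4)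

theorem hasDerivAt_boundaryFlagCurvature (μ δ : ℝ) {t : ℝ} (ht : 1 - t ^ 2 ≠ 0) :
    HasDerivAt (boundaryFlagCurvature μ δ)
      (96 * t * (1 + t ^ 2) ^ 2 * (2 * δ ^ 2 - (μ ^ 2 - 6 * δ ^ 2) * t ^ 2) /
        (μ * (1 - t ^ 2) ^ 5)) t := by
  set A := 40 * δ ^ 2 - 7 * μ ^ 2 with hA
  set B := μ ^ 2 + 8 * δ ^ 2 with hB
  have hfactor : boundaryFlagCurvature μ δ =
      fun x ↦ (1 + x ^ 2) ^ (2 + 1) * (A * x ^ 2 + B) / (1 - x ^ 2) ^ (2 + 2) / μ := by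
    funext x
    rw [boundaryFlagCurvature, add_assoc, div_div, mul_comm μ]
  have hsq : HasDerivAt (fun x : ℝ ↦ x ^ 2) (2 * t) t := by simpa using hasDerivAt_pow 2 t
  have hquot := hasDerivAt_one_add_pow_mul_linear_div_one_sub_pow A B 2 ht
  rw [hfactor]
  refine ((HasDerivAt.comp (h := fun x ↦ x ^ 2) t hquot hsq).div_const μ).congr_deriv ?_
  push_cast [hA, hB]
  field_simp
  ring

theorem deriv_boundaryFlagCurvature_eq_zero_iff {μ δ t : ℝ} (hμ : μ ≠ 0) (ht₀ : t ≠ 0)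
    (ht : 1 - t ^ 2 ≠ 0) :
    deriv (boundaryFlagCurvature μ δ) t = 0 ↔ (μ ^ 2 - 6 * δ ^ 2) * t ^ 2 = 2 * δ ^ 2 := by
  have hden : μ * (1 - t ^ 2) ^ 5 ≠ 0 := mul_ne_zero hμ (pow_ne_zero 5 ht)
  have hfactor : 96 * t * (1 + t ^ 2) ^ 2 ≠ 0 := by positivity
  rw [(hasDerivAt_boundaryFlagCurvature μ δ ht).deriv, div_eq_zero_iff, or_iff_left hden,
    mul_eq_zero_iff_left hfactor, sub_eq_zero, eq_comm]

theorem mul_sq_eq_mul_sq_iff_eq_sqrt_mul_div_sqrt {a b c t : ℝ} (ha : 0 < a) (hb : 0 ≤ b)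
    (hc : 0 ≤ c) (ht : 0 ≤ t) : a * t ^ 2 = b * c ^ 2 ↔ t = √b * c / √a := by
  rw [eq_div_iff (Real.sqrt_pos.2 ha).ne',
    ← sq_eq_sq₀ (mul_nonneg ht (Real.sqrt_nonneg a)) (mul_nonneg (Real.sqrt_nonneg b) hc),
    mul_pow, mul_pow, Real.sq_sqrt ha.le, Real.sq_sqrt hb, mul_comm a]

theorem two_mul_div_sqrt_sub_lt_one {μ δ : ℝ} (h : 8 * δ ^ 2 < μ ^ 2) :
    2 * δ / √(μ ^ 2 - 4 * δ ^ 2) < 1 := by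
  have hpos : 0 < μ ^ 2 - 4 * δ ^ 2 := by linarith [sq_nonneg δ]
  rw [div_lt_one (Real.sqrt_pos.2 hpos)]
  exact Real.lt_sqrt_of_sq_lt (by linarith)

theorem sqrt_two_mul_div_sqrt_sub_lt_two_mul_div_sqrt_sub {μ δ : ℝ} (hδ : 0 < δ)
    (h : 8 * δ ^ 2 < μ ^ 2) :
    √2 * δ / √(μ ^ 2 - 6 * δ ^ 2) < 2 * δ / √(μ ^ 2 - 4 * δ ^ 2) := by
  have hpos : 0 < μ ^ 2 - 4 * δ ^ 2 := by linarith [sq_nonneg δ]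
  calc √2 * δ / √(μ ^ 2 - 6 * δ ^ 2)
      = √2 * (√2 * δ) / (√2 * √(μ ^ 2 - 6 * δ ^ 2)) := (mul_div_mul_left _ _ (by positivity)).symm
    _ = 2 * δ / √(2 * (μ ^ 2 - 6 * δ ^ 2)) := by
      rw [← mul_assoc, Real.mul_self_sqrt zero_le_two, Real.sqrt_mul zero_le_two]
    _ < 2 * δ / √(μ ^ 2 - 4 * δ ^ 2) := by
      gcongr
      linarith

theorem stmt_18_general {μ δ t_o t₁ : ℝ} (hδ : 0 < δ) (hreg : 8 * δ ^ 2 < μ ^ 2)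
    (hto : t_o = 2 * δ / √(μ ^ 2 - 4 * δ ^ 2)) (ht₁ : t₁ = √2 * δ / √(μ ^ 2 - 6 * δ ^ 2)) :
    t_o < 1 ∧ (0 < t₁ ∧ t₁ < t_o) ∧
      ∀ t ∈ Ioo 0 t_o, deriv (boundaryFlagCurvature μ δ) t = 0 ↔ t = t₁ := by
  have hμ : μ ≠ 0 := sq_pos_iff.1 ((by positivity : 0 < 8 * δ ^ 2).trans hreg)
  have hpos : 0 < μ ^ 2 - 6 * δ ^ 2 := by linarith [sq_nonneg δ]
  have hto_lt : t_o < 1 := hto ▸ two_mul_div_sqrt_sub_lt_one hreg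
  refine ⟨hto_lt, ⟨by rw [ht₁]; positivity, ?_⟩, ?_⟩
  · rw [ht₁, hto]
    exact sqrt_two_mul_div_sqrt_sub_lt_two_mul_div_sqrt_sub hδ hreg
  · rintro t ⟨ht₀, ht⟩
    have ht_sq : t ^ 2 < 1 := pow_lt_one₀ ht₀.le (ht.trans hto_lt) two_ne_zero
    rw [deriv_boundaryFlagCurvature_eq_zero_iff hμ ht₀.ne' (sub_pos.2 ht_sq).ne', ht₁]
    exact mul_sq_eq_mul_sq_iff_eq_sqrt_mul_div_sqrt hpos zero_le_two hδ.le ht₀.le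

/-- for `μ² > 12δ²` and
`λ(t) = (1+t²)³[(40δ²-7μ²)t²+μ²+8δ²]/(μ(1-t²)⁴)`, the equation `λ'(t) = 0` has exactly
one solution in `(0, t_o)`, namely `t₁ = √2δ/√(μ²-6δ²)`, where
`t_o = 2δ/√(μ²-4δ²) < 1`; in particular `0 < t₁ < t_o`. -/
theorem stmt_18 (μ δ t_o t₁ : ℝ) (hμ : 0 < μ) (hδ : 0 < δ)
    (hreg : 12 * δ ^ 2 < μ ^ 2)
    (hto : t_o = 2 * δ / Real.sqrt (μ ^ 2 - 4 * δ ^ 2))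
    (ht₁ : t₁ = Real.sqrt 2 * δ / Real.sqrt (μ ^ 2 - 6 * δ ^ 2)) :
    t_o < 1 ∧
    (0 < t₁ ∧ t₁ < t_o) ∧
    ∀ t ∈ Ioo (0:ℝ) t_o,
      (deriv (fun x : ℝ =>
          ((1 + x ^ 2) ^ 3 * ((40 * δ ^ 2 - 7 * μ ^ 2) * x ^ 2 + μ ^ 2 + 8 * δ ^ 2)) /
            (μ * (1 - x ^ 2) ^ 4)) t = 0 ↔ t = t₁) :=
  stmt_18_general hδ (by linarith [sq_nonneg δ]) hto ht₁
end
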